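/- Let 𝒯 be a well-founded tree, c an injective function from finite sequences of naturals to ℕ, and φ₀ the unique function on 𝒯 with φ₀(x⃗) = 2·c(x⃗)+1 on leaves and φ₀(x⃗) = 2·φ₀(x⃗·0) on internal nodes. Let d ∈ ℕ and x₀,…,x_d ∈ ℕ be such that for every w ≤ d+1 the sequence x^w := (x₀,…,x_{w−1}) is an internal node of 𝒯. Put y_w = φ₀(x^w·0) for w ≤ d+1, and assume the odd parts θ(y₀),…,θ(y_{d+1}) are pairwise distinct. Let K ∈ ℕ and define G₁ : (ℕ → ℕ) → ℕ by: G₁(g) = K if g(0) = y_{d+1}; otherwise, if g(0) = y_w for some w ≤ d (unique, since the y's are pairwise distinct), then G₁(g) = K if g(x_w) = K and G₁(g) = 2·g(0) otherwise; otherwise G₁(g) = 2·g(0). Let φ₁ be the unique function on 𝒯 with φ₁(x⃗) = 2·c(x⃗)+1 on leaves and φ₁(x⃗) = G₁(λz. φ₁(x⃗·z)) on internal nodes. Then φ₁(x^w) = K for every w ≤ d+1; in particular φ₁ takes the value K at the empty sequence. -/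

import Mathlib

/-- The function `[x⃗ j^ω]` extending a finite sequence by the constant `j`. -/
def extSeq (x : List ℕ) (j : ℕ) : ℕ → ℕ := fun i => x.getD i j

/-- The Spector bar condition: `F([x⃗ 0^ω]) < |x⃗|`. -/
def SpecBar (F : (ℕ → ℕ) → ℕ) (x : List ℕ) : Prop :=
  F (extSeq x 0) < x.length

/-- The Kohlenbach bar condition: `F([x⃗ 0^ω]) = F([x⃗ 1^ω])`. -/
def KohBar (F : (ℕ → ℕ) → ℕ) (x : List ℕ) : Prop :=
  F (extSeq x 0) = F (extSeq x 1)

/-- The Spector tree of `F`: sequences none of whose proper prefixes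
satisfy the Spector bar condition. -/
def SpecTree (F : (ℕ → ℕ) → ℕ) : Set (List ℕ) :=
  {x | ∀ y, y <+: x → y ≠ x → ¬ SpecBar F y}

/-- The Kohlenbach tree of `F`. -/
def KohTree (F : (ℕ → ℕ) → ℕ) : Set (List ℕ) :=
  {x | ∀ y, y <+: x → y ≠ x → ¬ KohBar F y}

/-- `x` is a leaf of `T`. -/
def LeafNode (T : Set (List ℕ)) (x : List ℕ) : Prop :=
  x ∈ T ∧ ∀ y : ℕ, x ++ [y] ∉ T

/-- `x` is an internal node of `T`. -/
def InternalNode (T : Set (List ℕ)) (x : List ℕ) : Prop :=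
  x ∈ T ∧ ∀ y : ℕ, x ++ [y] ∈ T

/-- `T` is a tree: nonempty, prefix-closed, and every node is a leaf or internal. -/
def IsTree (T : Set (List ℕ)) : Prop :=
  T.Nonempty ∧ (∀ x ∈ T, ∀ y, y <+: x → y ∈ T) ∧
    ∀ x ∈ T, LeafNode T x ∨ InternalNode T x

/-- `T` is well-founded: no infinite sequence all of whose initial segments lie in `T`. -/
def WFTree (T : Set (List ℕ)) : Prop :=
  ¬ ∃ x : ℕ → ℕ, ∀ i : ℕ, (List.range i).map x ∈ T

/-- The odd part `θ(n)` of a natural number. -/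
def oddPart (n : ℕ) : ℕ := n / 2 ^ (n.factorization 2)

theorem oddPart_two_pow_mul (j n : ℕ) (hn : 0 < n) : oddPart (2 ^ j * n) = oddPart n := by
  unfold oddPart
  rw [Nat.factorization_mul (by positivity) hn.ne', Nat.Prime.factorization_pow Nat.prime_two]
  simp only [Finsupp.add_apply, Finsupp.single_eq_same, pow_add]
  exact Nat.mul_div_mul_left _ _ (by positivity)

theorem exists_zeros_notMem (T : Set (List ℕ)) (hT : IsTree T) (hwf : WFTree T) (v : List ℕ) :
    ∃ k, v ++ List.replicate k 0 ∉ T := by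
  by_contra! h
  refine hwf ⟨fun i => v.getD i 0, fun i => ?_⟩
  refine hT.2.1 _ (h i) _ ?_
  rw [List.prefix_iff_eq_take]
  apply List.ext_getElem
  · simp
  · intro n h1 h2
    simp only [List.length_map, List.length_range] at h1
    simp only [List.getElem_map, List.getElem_range, List.getElem_take, List.getElem_append,
      List.getElem_replicate]
    split_ifs with h3
    · simp [h3]
    · simp [List.getD, List.getElem?_eq_none (not_lt.mp h3)]

theorem phi1_K_values (T : Set (List ℕ)) (hT : IsTree T) (hwf : WFTree T)
    (c : List ℕ → ℕ) (hc : Function.Injective c)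
    (φ₀ : List ℕ → ℕ)
    (hleaf0 : ∀ v, LeafNode T v → φ₀ v = 2 * c v + 1)
    (hint0 : ∀ v, InternalNode T v → φ₀ v = 2 * φ₀ (v ++ [0]))
    (d : ℕ) (xs : ℕ → ℕ)
    (hxs : ∀ w ≤ d + 1, InternalNode T ((List.range w).map xs))
    (y : ℕ → ℕ)
    (hy : ∀ w ≤ d + 1, y w = φ₀ ((List.range w).map xs ++ [0]))
    (hdist : ∀ w ≤ d + 1, ∀ w' ≤ d + 1, w ≠ w' → oddPart (y w) ≠ oddPart (y w'))
    (K : ℕ) (G₁ : (ℕ → ℕ) → ℕ)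
    (hG₁ : ∀ g : ℕ → ℕ,
      (g 0 = y (d + 1) → G₁ g = K) ∧
      (∀ w ≤ d, g 0 = y w → g 0 ≠ y (d + 1) →
        G₁ g = if g (xs w) = K then K else 2 * g 0) ∧
      ((∀ w ≤ d + 1, g 0 ≠ y w) → G₁ g = 2 * g 0))
    (φ₁ : List ℕ → ℕ)
    (hleaf1 : ∀ v, LeafNode T v → φ₁ v = 2 * c v + 1)
    (hint1 : ∀ v, InternalNode T v → φ₁ v = G₁ (fun z => φ₁ (v ++ [z]))) :
    (∀ w ≤ d + 1, φ₁ ((List.range w).map xs) = K) ∧ φ₁ [] = K := by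
  have key : ∀ k, ∀ u ∈ T, u ++ List.replicate k 0 ∉ T → 0 < φ₀ u ∧
      ∀ w ≤ d + 1, (∃ j, y w = 2 ^ j * φ₀ u) → φ₁ u = φ₀ u := by
    intro k
    induction k with
    | zero => intro u hu h; simp [hu] at h
    | succ k ih =>
      intro u hu h
      rcases hT.2.2 u hu with hl | hi
      · rw [hleaf0 u hl, hleaf1 u hl]
        exact ⟨by omega, fun _ _ _ => rfl⟩
      · obtain ⟨hpos, h2⟩ := ih (u ++ [0]) (hi.2 0) (by
          simpa [List.replicate_succ] using h)
        have e0 := hint0 u hi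
        refine ⟨by omega, ?_⟩
        rintro w hw ⟨j, hj⟩
        have hj' : y w = 2 ^ (j + 1) * φ₀ (u ++ [0]) := by rw [hj, e0]; ring
        have e1 := h2 w hw ⟨j + 1, hj'⟩
        rw [hint1 u hi, (hG₁ _).2.2, e0, e1]
        intro w' hw' hg
        simp only [e1] at hg
        by_cases hww : w' = w
        · subst hww
          have : 2 ≤ 2 ^ (j + 1) := by
            have := Nat.one_le_two_pow (n := j)
            rw [pow_succ]; omega
          nlinarith
        · apply hdist w' hw' w hw hww
          rw [hj', oddPart_two_pow_mul _ _ hpos, hg]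
  have key2 : ∀ w ≤ d + 1, φ₁ ((List.range w).map xs ++ [0]) = y w := by
    intro w hw
    obtain ⟨k, hk⟩ := exists_zeros_notMem T hT hwf ((List.range w).map xs ++ [0])
    rw [hy w hw]
    exact (key k _ ((hxs w hw).2 0) hk).2 w hw ⟨0, by simp [hy w hw]⟩
  have main : ∀ m w, w + m = d + 1 → φ₁ ((List.range w).map xs) = K := by
    intro m
    induction m with
    | zero =>
      intro w hw
      have hw' : w = d + 1 := by omega
      subst hw'
      rw [hint1 _ (hxs _ le_rfl)]
      exact (hG₁ _).1 (key2 _ le_rfl)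
    | succ m ih =>
      intro w hw
      have e := ih (w + 1) (by omega)
      rw [List.range_succ, List.map_append, List.map_singleton] at e
      have hne : y w ≠ y (d + 1) := fun h =>
        hdist w (by omega) (d + 1) le_rfl (by omega) (by rw [h])
      have e2 := key2 w (by omega)
      rw [hint1 _ (hxs w (by omega)),
        (hG₁ _).2.1 w (by omega) e2 (by simpa only [e2] using hne)]
      simp only [e, if_true]
  have main' : ∀ w ≤ d + 1, φ₁ ((List.range w).map xs) = K :=
    fun w hw => main (d + 1 - w) w (by omega)
  exact ⟨main', by simpa using main' 0 (by omega)⟩
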